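/- Let K be a field of characteristic 0, M/K a finite Galois extension with group G, and X = {δ₁,…,δ_n} ⊂ M a G-orbit generating M over K with ∑_i δ_i = 0 and δ₁ ≠ 0. Suppose G acts 2-transitively on X. Let L = K(δ₁), V₀ the space of ℚ-valued functions on X summing to 0. Then the K[G]-module map φ : ker(Tr_{L/K}) ⊗ V₀ → M sending γ ⊗ ∑ a_i [g_i G₁] ↦ ∑ a_i g_i(γ) is injective. -/

import Mathlib

open Finset TensorProduct

/-!
View a tensor in `ker Tr ⊗ V₀` as a family `γᵢ` of trace-zero elements of `L` with `∑ᵢ γᵢ = 0`, so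
that `φ` maps it to `∑ᵢ gᵢ(γᵢ)`, and put `u i k = gₖ(γᵢ)`. The rows of the matrix `u` sum to zero
because the `gₖ` restrict to all the embeddings of `L` into `M`, the columns because `∑ᵢ γᵢ = 0`.
If `∑ᵢ gᵢ(γᵢ) = 0`, applying Galois automorphisms gives `∑ᵢ u i (π i) = 0` for every permutation
`π` of the indices that they induce. For a 2-transitive group `P` of permutations these conditions
force `|P| • u = 0`: averaging over the stabilizer of `j` replaces the term of row `i ≠ j` by the
mean `-u i j / (n - 1)` of that row off `j`, and since column `j` sums to zero, what remains is a
nonzero multiple of `u j j`; the other entries follow by transitivity.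
-/

open scoped IntermediateField

section PermutationGroup

variable {H G X V : Type*} [AddCommGroup V]

theorem sum_comp_smul_smul [Group H] [Fintype H] [MulAction H X] (e : X → V) (h₀ : H) (x : X) :
    ∑ h : H, e (h • h₀ • x) = ∑ h : H, e (h • x) := by
  simp_rw [smul_smul]
  exact Equiv.sum_comp (Equiv.mulRight h₀) fun h ↦ e (h • x)

theorem sum_comp_smul_eq_zero [Group H] [MulAction H X] [Fintype X] {e : X → V}
    (he : ∑ x, e x = 0) (h : H) : ∑ x, e (h • x) = 0 :=
  (Equiv.sum_comp (MulAction.toPerm h) e).trans he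

theorem card_erase_nsmul_sum_comp_smul [Group H] [Fintype H] [MulAction H X] [Fintype X]
    [DecidableEq X] {j x : X} (hfix : ∀ h : H, h • j = j)
    (htrans : ∀ y ≠ j, ∀ z ≠ j, ∃ h : H, h • y = z) (hx : x ≠ j)
    {e : X → V} (he : ∑ y, e y = 0) :
    #(univ.erase j) • ∑ h : H, e (h • x) = -(Fintype.card H • e j) := by
  have total : ∑ y, ∑ h : H, e (h • y) = 0 := by
    rw [sum_comm]
    exact sum_eq_zero fun h _ ↦ sum_comp_smul_eq_zero he h
  have off_j : ∀ y ∈ univ.erase j, ∑ h : H, e (h • y) = ∑ h : H, e (h • x) := by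
    intro y hy
    obtain ⟨h₀, rfl⟩ := htrans x hx y (ne_of_mem_erase hy)
    exact sum_comp_smul_smul e h₀ x
  have at_j : ∑ h : H, e (h • j) = Fintype.card H • e j := by
    simp only [hfix, sum_const, card_univ]
  rw [← add_sum_erase _ _ (mem_univ j), at_j, sum_congr rfl off_j, sum_const] at total
  exact eq_neg_of_add_eq_zero_right total

theorem card_mul_card_nsmul_diag_eq_zero [Group H] [Fintype H] [MulAction H X] [Fintype X] {j : X}
    (hfix : ∀ h : H, h • j = j) (htrans : ∀ y ≠ j, ∀ z ≠ j, ∃ h : H, h • y = z)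
    {u : X → X → V} (hrow : ∀ x, ∑ y, u x y = 0) (hcol : ∑ x, u x j = 0)
    (hdiag : ∀ h : H, ∑ x, u x (h • x) = 0) :
    (Fintype.card X * Fintype.card H) • u j j = 0 := by
  classical
  set m := #(univ.erase j)
  have hcard : Fintype.card X = m + 1 := (card_erase_add_one (mem_univ j)).symm
  have at_j : ∑ h : H, u j (h • j) = Fintype.card H • u j j := by
    simp only [hfix, sum_const, card_univ]
  have off_j : ∑ x ∈ univ.erase j, m • ∑ h : H, u x (h • x) = Fintype.card H • u j j := by
    rw [← add_sum_erase _ _ (mem_univ j)] at hcol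
    rw [sum_congr rfl fun x hx ↦ card_erase_nsmul_sum_comp_smul hfix htrans (ne_of_mem_erase hx)
      (hrow x), sum_neg_distrib, ← smul_sum, eq_neg_of_add_eq_zero_left hcol, smul_neg]
  calc (Fintype.card X * Fintype.card H) • u j j
      = m • ∑ h : H, u j (h • j) + ∑ x ∈ univ.erase j, m • ∑ h : H, u x (h • x) := by
        rw [at_j, off_j, hcard, mul_nsmul', add_nsmul, one_nsmul]
    _ = m • ∑ h : H, ∑ x, u x (h • x) := by
        rw [add_sum_erase _ (fun x ↦ m • ∑ h : H, u x (h • x)) (mem_univ j), ← smul_sum, sum_comm]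
    _ = 0 := by simp only [hdiag, sum_const_zero, smul_zero]

theorem card_nsmul_eq_zero_of_isMultiplyPretransitive_two [Group G] [Finite G] [MulAction G X]
    [Fintype X] [MulAction.IsMultiplyPretransitive G X 2] {u : X → X → V}
    (hrow : ∀ x, ∑ y, u x y = 0) (hcol : ∀ y, ∑ x, u x y = 0)
    (hdiag : ∀ g : G, ∑ x, u x (g • x) = 0) (j k : X) :
    Nat.card G • u j k = 0 := by
  have := MulAction.isPretransitive_of_is_two_pretransitive (G := G) (α := X)
  have := Fintype.ofFinite (MulAction.stabilizer G j)
  have hcard : Nat.card G = Fintype.card X * Fintype.card (MulAction.stabilizer G j) := by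
    rw [← (MulAction.stabilizer G j).index_mul_card, MulAction.index_stabilizer_of_transitive,
      Nat.card_eq_fintype_card, Nat.card_eq_fintype_card]
  have htrans : ∀ y ≠ j, ∀ z ≠ j, ∃ h : MulAction.stabilizer G j, h • y = z := by
    intro y hy z hz
    obtain ⟨h, hj, hyz⟩ := MulAction.is_two_pretransitive_iff.1 ‹_› hy.symm hz.symm
    exact ⟨⟨h, hj⟩, hyz⟩
  obtain ⟨g, rfl⟩ := MulAction.exists_smul_eq G j k
  rw [hcard]
  exact card_mul_card_nsmul_diag_eq_zero (u := fun x y ↦ u x (g • y)) (fun h ↦ h.2) htrans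
    (fun x ↦ sum_comp_smul_eq_zero (hrow x) g) (hcol _)
    fun h ↦ by simpa only [mul_smul] using! hdiag (g * h)

end PermutationGroup

section InducedPerm

variable (G : Type*) {α ι : Type*} [Group G] [MulAction G α]

/-- The group of those permutations of the index set of a family `δ` that are induced by the action
of `G` on the members of `δ`. When `δ` enumerates the roots of a polynomial and `G` is a Galois
group, this is the Galois group of the polynomial as a permutation group. -/
def inducedPerm (δ : ι → α) : Subgroup (Equiv.Perm ι) where
  carrier := {π | ∃ g : G, ∀ i, g • δ i = δ (π i)}
  one_mem' := ⟨1, fun i ↦ one_smul G (δ i)⟩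
  mul_mem' := by
    rintro π ρ ⟨g, hg⟩ ⟨h, hh⟩
    exact ⟨g * h, fun i ↦ by rw [mul_smul, hh, hg, Equiv.Perm.mul_apply]⟩
  inv_mem' := by
    rintro π ⟨g, hg⟩
    exact ⟨g⁻¹, fun i ↦ by
      rw [inv_smul_eq_iff, hg, ← Equiv.Perm.mul_apply, mul_inv_cancel, Equiv.Perm.one_apply]⟩

variable {G} [Finite ι] {δ : ι → α}

theorem exists_mem_inducedPerm (hδ : Function.Injective δ) {g : G}
    (hg : ∀ i, ∃ j, g • δ i = δ j) : ∃ π ∈ inducedPerm G δ, ∀ i, g • δ i = δ (π i) := by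
  choose p hp using hg
  have hinj : Function.Injective p := fun i j hij ↦
    hδ <| MulAction.injective g <| show g • δ i = g • δ j by rw [hp, hp, hij]
  exact ⟨Equiv.ofBijective p (Finite.injective_iff_bijective.1 hinj), ⟨g, hp⟩, hp⟩

theorem isMultiplyPretransitive_two_inducedPerm (hδ : Function.Injective δ)
    (horb : ∀ (g : G) (i), ∃ j, g • δ i = δ j)
    (h2t : ∀ i₁ i₂ j₁ j₂, i₁ ≠ i₂ → j₁ ≠ j₂ → ∃ g : G, g • δ i₁ = δ j₁ ∧ g • δ i₂ = δ j₂) :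
    MulAction.IsMultiplyPretransitive (inducedPerm G δ) ι 2 := by
  refine MulAction.is_two_pretransitive_iff.2 fun {i₁ i₂ j₁ j₂} hi hj ↦ ?_
  obtain ⟨g, h₁, h₂⟩ := h2t i₁ i₂ j₁ j₂ hi hj
  obtain ⟨π, hπ, hgπ⟩ := exists_mem_inducedPerm hδ (horb g)
  exact ⟨⟨π, hπ⟩, hδ ((hgπ i₁).symm.trans h₁), hδ ((hgπ i₂).symm.trans h₂)⟩

end InducedPerm

section TensorCoord

variable {K ι : Type*} [CommRing K] (W : Type*) [AddCommGroup W] [Module K W]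

/-- The coordinates of a tensor in `W ⊗ V`, for a submodule `V` of `ι → K`: the family of
elements of `W` that corresponds to its image in `W ⊗ (ι → K)`. -/
noncomputable def tensorCoord (V : Submodule K (ι → K)) : W ⊗[K] V →ₗ[K] ι → W :=
  TensorProduct.piScalarRightHom K K W ι ∘ₗ LinearMap.lTensor W V.subtype

variable {W}

@[simp]
theorem tensorCoord_tmul {V : Submodule K (ι → K)} (w : W) (a : V) (i : ι) :
    tensorCoord W V (w ⊗ₜ a) i = (a : ι → K) i • w := by
  simp [tensorCoord]

theorem tensorCoord_injective [Finite ι] [Module.Flat K W] (V : Submodule K (ι → K)) :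
    Function.Injective (tensorCoord W V) := by
  classical
  have := Fintype.ofFinite ι
  exact (TensorProduct.piScalarRight K K W ι).injective.comp
    (Module.Flat.lTensor_preserves_injective_linearMap _ V.injective_subtype)

theorem sum_tensorCoord_eq_zero [Fintype ι] {V : Submodule K (ι → K)}
    (hV : ∀ a ∈ V, ∑ i, a i = 0) (t : W ⊗[K] V) : ∑ i, tensorCoord W V t i = 0 := by
  induction t with
  | zero => simp
  | add s t hs ht => simp [sum_add_distrib, hs, ht]
  | tmul w a => simp_rw [tensorCoord_tmul, ← sum_smul, hV a a.2, zero_smul]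

theorem eq_sum_tensorCoord [Fintype ι] {M : Type*} [AddCommGroup M] [Module K M]
    {V : Submodule K (ι → K)} (ψ : W ⊗[K] V →ₗ[K] M) (f : ι → W →ₗ[K] M)
    (hψ : ∀ (w : W) (a : V), ψ (w ⊗ₜ a) = ∑ i, (a : ι → K) i • f i w) (t : W ⊗[K] V) :
    ψ t = ∑ i, f i (tensorCoord W V t i) := by
  induction t with
  | zero => simp
  | add s t hs ht => simp [sum_add_distrib, hs, ht]
  | tmul w a => simp [hψ]

end TensorCoord

section Conjugates

variable {K M ι : Type*} [Field K] [Field M] [Algebra K M]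

theorem algebraMap_trace_eq_sum_algHom_of_splits {L : Type*} [Field L] [Algebra K L]
    [FiniteDimensional K L] [Algebra.IsSeparable K L]
    (hsplits : ∀ x : L, ((minpoly K x).map (algebraMap K M)).Splits) (x : L) :
    algebraMap K M (Algebra.trace K L x) = ∑ τ : L →ₐ[K] M, τ x := by
  apply (algebraMap M (AlgebraicClosure M)).injective
  rw [← IsScalarTower.algebraMap_apply, trace_eq_sum_embeddings, map_sum]
  exact (Equiv.sum_comp
    (Algebra.IsAlgebraic.algHomEquivAlgHomOfSplits (AlgebraicClosure M) M hsplits)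
    fun τ ↦ τ x).symm

theorem algHom_ext_adjoin_simple {A : Type*} [Semiring A] [Algebra K A] {d : M}
    {φ₁ φ₂ : K⟮d⟯ →ₐ[K] A}
    (h : φ₁ (IntermediateField.AdjoinSimple.gen K d) =
      φ₂ (IntermediateField.AdjoinSimple.gen K d)) : φ₁ = φ₂ := by
  refine IntermediateField.adjoin_algHom_ext K fun y hy ↦ ?_
  obtain rfl := Set.mem_singleton_iff.1 hy
  exact h

theorem apply_eq_of_mem_adjoin_simple {d x : M} {σ τ : M ≃ₐ[K] M} (h : σ d = τ d)
    (hx : x ∈ K⟮d⟯) : σ x = τ x :=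
  DFunLike.congr_fun (algHom_ext_adjoin_simple (φ₁ := (σ : M →ₐ[K] M).comp K⟮d⟯.val)
    (φ₂ := (τ : M →ₐ[K] M).comp K⟮d⟯.val) h) ⟨x, hx⟩

variable {d : M} {g : ι → M ≃ₐ[K] M}

theorem bijective_comp_val_adjoin_simple [Normal K M] (hinj : Function.Injective fun i ↦ g i d)
    (horb : ∀ σ : M ≃ₐ[K] M, ∃ i, σ d = g i d) :
    Function.Bijective fun i ↦ (g i : M →ₐ[K] M).comp K⟮d⟯.val := by
  refine ⟨fun i j hij ↦ hinj <|
    DFunLike.congr_fun hij (IntermediateField.AdjoinSimple.gen K d), fun τ ↦ ?_⟩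
  have hroot : Polynomial.aeval (τ (IntermediateField.AdjoinSimple.gen K d)) (minpoly K d) = 0 := by
    rw [← IntermediateField.minpoly_gen, Polynomial.aeval_algHom_apply, minpoly.aeval, map_zero]
  obtain ⟨σ, hσ⟩ := minpoly.exists_algEquiv_of_root' (Algebra.IsAlgebraic.isAlgebraic d) hroot
  obtain ⟨i, hi⟩ := horb σ
  exact ⟨i, algHom_ext_adjoin_simple (hi.symm.trans hσ)⟩

theorem sum_conj_eq_algebraMap_trace [IsGalois K M] [Fintype ι]
    (hinj : Function.Injective fun i ↦ g i d) (horb : ∀ σ : M ≃ₐ[K] M, ∃ i, σ d = g i d)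
    (x : K⟮d⟯) : ∑ i, g i x = algebraMap K M (Algebra.trace K K⟮d⟯ x) := by
  have hd : IsIntegral K d := Algebra.IsIntegral.isIntegral d
  have := IntermediateField.adjoin.finiteDimensional hd
  have hsplits (y : K⟮d⟯) : ((minpoly K y).map (algebraMap K M)).Splits := by
    rw [IntermediateField.minpoly_eq]
    exact Normal.splits inferInstance (y : M)
  rw [algebraMap_trace_eq_sum_algHom_of_splits hsplits]
  exact (bijective_comp_val_adjoin_simple hinj horb).sum_comp fun τ : K⟮d⟯ →ₐ[K] M ↦ τ x

theorem eq_zero_of_sum_conj_eq_zero [IsGalois K M] [Fintype ι] {δ : ι → M}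
    (hδ : Function.Injective δ)
    (hcard : (Nat.card (inducedPerm (M ≃ₐ[K] M) δ) : K) ≠ 0)
    (horb : ∀ (σ : M ≃ₐ[K] M) (i), ∃ j, σ (δ i) = δ j)
    (h2t : ∀ i₁ i₂ j₁ j₂, i₁ ≠ i₂ → j₁ ≠ j₂ →
      ∃ σ : M ≃ₐ[K] M, σ (δ i₁) = δ j₁ ∧ σ (δ i₂) = δ j₂)
    {i₀ : ι} (hg : ∀ i, g i (δ i₀) = δ i) {γ : ι → K⟮δ i₀⟯}
    (htrace : ∀ i, Algebra.trace K K⟮δ i₀⟯ (γ i) = 0) (hsum : ∑ i, γ i = 0)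
    (hconj : ∑ i, g i (γ i) = 0) : γ = 0 := by
  have := isMultiplyPretransitive_two_inducedPerm hδ horb h2t
  have hrow (i) : ∑ k, g k (γ i) = 0 := by
    rw [sum_conj_eq_algebraMap_trace (by simpa only [hg] using hδ)
      (by simpa only [hg] using (horb · i₀)), htrace, map_zero]
  have hcol (k) : ∑ i, g k (γ i) = 0 := by
    rw [← map_sum, ← AddSubmonoidClass.coe_finsetSum, hsum, ZeroMemClass.coe_zero, map_zero]
  have hdiag (π : inducedPerm (M ≃ₐ[K] M) δ) : ∑ i, g (π • i) (γ i) = 0 := by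
    obtain ⟨σ, hσ⟩ := π.2
    rw [← map_zero σ, ← hconj, map_sum]
    refine sum_congr rfl fun i _ ↦ ?_
    exact apply_eq_of_mem_adjoin_simple (τ := σ * g i)
      (by rw [AlgEquiv.mul_apply, hg, hg]; exact (hσ i).symm) (γ i).2
  funext j
  have hj : (Nat.card (inducedPerm (M ≃ₐ[K] M) δ) : K) • g j (γ j) = 0 := by
    rw [Nat.cast_smul_eq_nsmul]
    exact card_nsmul_eq_zero_of_isMultiplyPretransitive_two hrow hcol hdiag j j
  rw [smul_eq_zero_iff_right hcard, map_eq_zero_iff _ (g j).injective] at hj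
  exact Subtype.ext hj

end Conjugates

theorem phi_injective_general {K M ι : Type*} [Field K] [Field M] [Algebra K M] [IsGalois K M]
    [Fintype ι] {δ : ι → M} (hδ : Function.Injective δ)
    (hcard : (Nat.card (inducedPerm (M ≃ₐ[K] M) δ) : K) ≠ 0)
    (horb : ∀ (σ : M ≃ₐ[K] M) (i), ∃ j, σ (δ i) = δ j)
    (h2t : ∀ i₁ i₂ j₁ j₂, i₁ ≠ i₂ → j₁ ≠ j₂ →
      ∃ σ : M ≃ₐ[K] M, σ (δ i₁) = δ j₁ ∧ σ (δ i₂) = δ j₂)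
    {i₀ : ι} {g : ι → M ≃ₐ[K] M} (hg : ∀ i, g i (δ i₀) = δ i)
    {V₀ : Submodule K (ι → K)} (hV₀ : ∀ a ∈ V₀, ∑ i, a i = 0)
    (ψ : LinearMap.ker (Algebra.trace K K⟮δ i₀⟯) ⊗[K] V₀ →ₗ[K] M)
    (hψ : ∀ (γ : LinearMap.ker (Algebra.trace K K⟮δ i₀⟯)) (a : V₀),
      ψ (γ ⊗ₜ a) = ∑ i, (a : ι → K) i • g i ((γ : K⟮δ i₀⟯) : M)) :
    Function.Injective ψ := by
  let f (i : ι) : LinearMap.ker (Algebra.trace K K⟮δ i₀⟯) →ₗ[K] M :=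
    ((g i : M →ₐ[K] M).comp K⟮δ i₀⟯.val).toLinearMap ∘ₗ Submodule.subtype _
  rw [injective_iff_map_eq_zero]
  intro t ht
  rw [eq_sum_tensorCoord ψ f hψ] at ht
  have hsum : ∑ i, (tensorCoord _ V₀ t i).1 = 0 := by
    rw [← AddSubmonoidClass.coe_finsetSum, sum_tensorCoord_eq_zero hV₀, ZeroMemClass.coe_zero]
  have hzero := eq_zero_of_sum_conj_eq_zero hδ hcard horb h2t hg
    (fun i ↦ (tensorCoord _ V₀ t i).2) hsum ht
  rw [← map_eq_zero_iff _ (tensorCoord_injective V₀)]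
  exact funext fun i ↦ Subtype.ext (congrFun hzero i)

/-- Let `K` be a field of characteristic `0`, `M/K` a finite Galois extension,
`X = {δ₁,…,δ_n} ⊂ M` a Galois orbit generating `M` over `K`, with `∑ δᵢ = 0` and
`δ₁ ≠ 0`, on which the Galois group acts 2-transitively.  Let `L = K(δ₁)` and let
`V₀` be the space of functions on `X` summing to `0`.  Then the `K`-linear map
`φ : ker(Tr_{L/K}) ⊗ V₀ → M`, `γ ⊗ ∑ aᵢ [gᵢG₁] ↦ ∑ aᵢ gᵢ(γ)`, is injective. -/
theorem phi_injective (K M : Type*) [Field K] [CharZero K] [Field M] [Algebra K M]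
    [FiniteDimensional K M] [IsGalois K M]
    (n : ℕ) (hn : 2 ≤ n) (δ : Fin n → M) (hinj : Function.Injective δ)
    (horb : ∀ σ : M ≃ₐ[K] M, ∀ i, ∃ j, σ (δ i) = δ j)
    (h2t : ∀ i₁ i₂ j₁ j₂ : Fin n, i₁ ≠ i₂ → j₁ ≠ j₂ →
      ∃ σ : M ≃ₐ[K] M, σ (δ i₁) = δ j₁ ∧ σ (δ i₂) = δ j₂)
    (hgen : IntermediateField.adjoin K (Set.range δ) = ⊤)
    (hsum : ∑ i, δ i = 0)
    (hδ0 : δ ⟨0, by omega⟩ ≠ 0)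
    (L : IntermediateField K M) (hL : L = IntermediateField.adjoin K {δ ⟨0, by omega⟩})
    (g : Fin n → (M ≃ₐ[K] M)) (hg : ∀ i, g i (δ ⟨0, by omega⟩) = δ i)
    (V₀ : Submodule K (Fin n → K))
    (hV₀ : V₀ = LinearMap.ker (∑ i : Fin n, LinearMap.proj i))
    (ψ : (LinearMap.ker (Algebra.trace K L) ⊗[K] V₀) →ₗ[K] M)
    (hψ : ∀ (γ : LinearMap.ker (Algebra.trace K L)) (a : V₀),
      ψ (γ ⊗ₜ a) = ∑ i, (a : Fin n → K) i • (g i ((γ : L) : M))) :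
    Function.Injective ψ := by
  subst hL hV₀
  exact phi_injective_general hinj (Nat.cast_ne_zero.2 Nat.card_pos.ne') horb h2t hg
    (fun a ha ↦ by simpa using ha) ψ hψ
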